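/- arXiv:2412.19280 — 3 statements merged into one kernel-verified Lean document; each statement's English description precedes it below -/
import Mathlib

section
/- Let p be a real number with 1 ≤ p < ∞. Let G : ℓ^m → ℓ^r be strictly causal, ℓ_p-stable and incrementally finite-gain ℓ_p-stable, and let Q : ℓ^r → ℓ^m be causal and ℓ_p-stable. For each y ∈ ℓ^r there exists a unique ω ∈ ℓ^r with ω = y − G(Q ω) (since G∘Q is strictly causal); define the controller K : ℓ^r → ℓ^m by K y := Q ω (equivalently, K = Q ∘ (G Q + I)^{-1}). Then K is causal and the closed loop of G and K is ℓ_p-stable: for all v ∈ ℓ_p^r and d ∈ ℓ_p^m, the unique closed-loop signals satisfying y = G u + v and u = K y + d lie in ℓ_p, i.e., y ∈ ℓ_p^r and u ∈ ℓ_p^m. -/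
/-- Sequences with values in `ℝ^n` (with the Euclidean norm). -/
abbrev Traj (n : ℕ) : Type := ℕ → EuclideanSpace ℝ (Fin n)

/-- A causal operator on sequences. -/
def Causal {n m : ℕ} (A : Traj n → Traj m) : Prop :=
  ∀ (x x' : Traj n) (t : ℕ), (∀ s, s ≤ t → x s = x' s) → A x t = A x' t

/-- A strictly causal operator on sequences. -/
def StrictlyCausal {n m : ℕ} (A : Traj n → Traj m) : Prop :=
  ∀ (x x' : Traj n) (t : ℕ), (∀ s, s < t → x s = x' s) → A x t = A x' t

/-- Causal in the first argument, strictly causal in the second argument. -/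
def CausalSC {n q m : ℕ} (B : Traj n → Traj q → Traj m) : Prop :=
  ∀ (x x' : Traj n) (z z' : Traj q) (t : ℕ),
    (∀ s, s ≤ t → x s = x' s) → (∀ s, s < t → z s = z' s) → B x z t = B x' z' t

/-- Causal in both arguments. -/
def CausalCC {n q m : ℕ} (B : Traj n → Traj q → Traj m) : Prop :=
  ∀ (x x' : Traj n) (z z' : Traj q) (t : ℕ),
    (∀ s, s ≤ t → x s = x' s) → (∀ s, s ≤ t → z s = z' s) → B x z t = B x' z' t

/-- Strictly causal in both arguments. -/
def CausalSS {n q m : ℕ} (B : Traj n → Traj q → Traj m) : Prop :=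
  ∀ (x x' : Traj n) (z z' : Traj q) (t : ℕ),
    (∀ s, s < t → x s = x' s) → (∀ s, s < t → z s = z' s) → B x z t = B x' z' t

/-- Membership in `ℓ_p`: summability of `‖x t‖ ^ p`. -/
def InLp (p : ℝ) {E : Type*} [Norm E] (x : ℕ → E) : Prop :=
  Summable fun t => ‖x t‖ ^ p

/-- The `ℓ_p` norm `(∑ₜ ‖x t‖ ^ p) ^ (1/p)` of a sequence. -/
noncomputable def lpSeqNorm (p : ℝ) {E : Type*} [Norm E] (x : ℕ → E) : ℝ :=
  (∑' t, ‖x t‖ ^ p) ^ (1 / p)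

/-- The `ℝ^{r+m}`-valued sequence obtained by stacking `v` and `d`
(the norm of `(v t, d t)` is the Euclidean norm of the concatenated vector). -/
noncomputable def pairSeq {r m : ℕ} (v : Traj r) (d : Traj m) :
    ℕ → WithLp 2 (EuclideanSpace ℝ (Fin r) × EuclideanSpace ℝ (Fin m)) :=
  fun t => (WithLp.equiv 2 _).symm (v t, d t)

/-- An exponentially decaying sequence: `‖x t‖ ≤ k · α ^ t` with `k > 0`, `α ∈ (0,1)`. -/
def ExpDecay {E : Type*} [Norm E] (x : ℕ → E) : Prop :=
  ∃ k : ℝ, 0 < k ∧ ∃ α : ℝ, 0 < α ∧ α < 1 ∧ ∀ t, ‖x t‖ ≤ k * α ^ t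

theorem inLp_iff_mem {n : ℕ} {p : ℝ} (hp : 1 ≤ p) (x : Traj n) :
    InLp p x ↔ Memℓp (E := fun _ : ℕ => EuclideanSpace ℝ (Fin n)) x (ENNReal.ofReal p) := by
  have h : (ENNReal.ofReal p).toReal = p := ENNReal.toReal_ofReal (by linarith)
  rw [memℓp_gen_iff (by rw [h]; linarith), h]
  rfl

theorem inLp_add {n : ℕ} {p : ℝ} (hp : 1 ≤ p) {x y : Traj n} (hx : InLp p x) (hy : InLp p y) :
    InLp p (x + y) := by
  rw [inLp_iff_mem hp] at *
  exact hx.add hy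

theorem inLp_sub {n : ℕ} {p : ℝ} (hp : 1 ≤ p) {x y : Traj n} (hx : InLp p x) (hy : InLp p y) :
    InLp p (x - y) := by
  rw [inLp_iff_mem hp] at *
  exact hx.sub hy

def truncSeq {n : ℕ} (T : ℕ) (x : Traj n) : Traj n := fun t => if t < T then x t else 0

theorem inLp_trunc {n : ℕ} {p : ℝ} (hp : 1 ≤ p) (T : ℕ) (x : Traj n) : InLp p (truncSeq T x) := by
  apply summable_of_ne_finset_zero (s := Finset.range T)
  intro t ht
  have : ¬ t < T := by simpa using ht
  simp only [truncSeq, if_neg this, norm_zero]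
  exact Real.zero_rpow (by linarith)

theorem norm_trunc_le {n : ℕ} {p : ℝ} (hp : 1 ≤ p) (T : ℕ) (x : Traj n) (hx : InLp p x) :
    lpSeqNorm p (truncSeq T x) ≤ lpSeqNorm p x := by
  unfold lpSeqNorm
  apply Real.rpow_le_rpow (tsum_nonneg fun t => by positivity) _ (by positivity)
  apply Summable.tsum_le_tsum _ (inLp_trunc hp T x) hx
  intro t
  apply Real.rpow_le_rpow (norm_nonneg _) _ (by linarith)
  unfold truncSeq
  split_ifs <;> simp

theorem exists_fix {n : ℕ} (F : Traj n → Traj n) (hF : StrictlyCausal F) : ∃ x, x = F x := by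
  have key : ∀ k t, t < k → F^[k] 0 t = F^[k+1] 0 t := by
    intro k
    induction k with
    | zero => intro t ht; omega
    | succ k ih =>
      intro t ht
      rw [Function.iterate_succ_apply', Function.iterate_succ_apply' F (k+1)]
      exact hF _ _ _ fun s hs => ih s (by omega)
  have key2 : ∀ t k, t + 1 ≤ k → F^[k] 0 t = F^[t+1] 0 t := by
    intro t k hk
    induction k, hk using Nat.le_induction with
    | base => rfl
    | succ k hk ih => rw [← key k t (by omega), ih]
  refine ⟨fun t => F^[t+1] 0 t, ?_⟩
  funext t
  rw [Function.iterate_succ_apply']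
  exact hF _ _ _ fun s hs => key2 s t hs

theorem agree_fix {n m : ℕ} (G : Traj m → Traj n) (Q : Traj n → Traj m) (hG : StrictlyCausal G)
    (hQ : Causal Q) (y y' w w' : Traj n) (hw : w = y - G (Q w)) (hw' : w' = y' - G (Q w'))
    (t : ℕ) (h : ∀ s, s ≤ t → y s = y' s) : ∀ s, s ≤ t → w s = w' s := by
  intro s
  induction s using Nat.strong_induction_on with
  | _ s ih =>
    intro hs
    rw [hw, hw', Pi.sub_apply, Pi.sub_apply, h s hs]
    congr 1
    exact hG _ _ _ fun a ha => hQ _ _ _ fun b hb => ih b (by omega) (by omega)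

/-- sufficiency of the internal-model (Youla) controller `K = Q ∘ (G Q + I)⁻¹`
for closed-loop ℓ_p-stability, for any causal ℓ_p-stable parameter `Q`. -/
theorem statement10 {r m : ℕ} (p : ℝ) (hp : 1 ≤ p)
    (G : Traj m → Traj r) (Q : Traj r → Traj m) (K : Traj r → Traj m)
    (hG : StrictlyCausal G)
    (hGstab : ∀ u : Traj m, InLp p u → InLp p (G u))
    (hGifg : ∃ γ : ℝ, 0 ≤ γ ∧ ∀ u₁ u₂ : Traj m, InLp p u₁ → InLp p u₂ →
      lpSeqNorm p (G u₁ - G u₂) ≤ γ * lpSeqNorm p (u₁ - u₂))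
    (hQ : Causal Q)
    (hQstab : ∀ ω : Traj r, InLp p ω → InLp p (Q ω))
    -- K y = Q ω, where ω is the unique sequence with ω = y − G(Q ω)
    (hKdef : ∀ y ω : Traj r, ω = y - G (Q ω) → K y = Q ω) :
    (∀ y : Traj r, ∃! ω : Traj r, ω = y - G (Q ω)) ∧
    Causal K ∧
    (∀ (v : Traj r) (d : Traj m) (y : Traj r) (u : Traj m),
      y = G u + v → u = K y + d → InLp p v → InLp p d → InLp p y ∧ InLp p u) := by
  have hex : ∀ y : Traj r, ∃ ω : Traj r, ω = y - G (Q ω) := by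
    intro y
    apply exists_fix (fun ω => y - G (Q ω))
    intro x x' t h
    simp only [Pi.sub_apply]
    congr 1
    exact hG _ _ _ fun a ha => hQ _ _ _ fun b hb => h b (by omega)
  refine ⟨?_, ?_, ?_⟩
  · intro y
    obtain ⟨ω, hω⟩ := hex y
    refine ⟨ω, hω, ?_⟩
    intro ω' hω'
    funext t
    exact agree_fix G Q hG hQ y y ω' ω hω' hω t (fun _ _ => rfl) t le_rfl
  · intro y y' t h
    obtain ⟨ω, hω⟩ := hex y
    obtain ⟨ω', hω'⟩ := hex y'
    rw [hKdef y ω hω, hKdef y' ω' hω']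
    exact hQ _ _ _ (agree_fix G Q hG hQ y y' ω ω' hω hω' t h)
  · intro v d y u hy hu hv hd
    obtain ⟨ω, hω⟩ := hex y
    rw [hKdef y ω hω] at hu
    obtain ⟨γ, hγ, hg⟩ := hGifg
    have hp0 : 0 < p := by linarith
    have hdiff : InLp p (G u - G (Q ω)) := by
      apply summable_of_sum_range_le (c := (γ * lpSeqNorm p d) ^ p)
      · intro t; positivity
      intro T
      have h1 := inLp_trunc hp T u
      have h2 := inLp_trunc hp T (Q ω)
      have h3 := hg _ _ h1 h2
      have h4 : truncSeq T u - truncSeq T (Q ω) = truncSeq T d := by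
        funext t
        simp only [truncSeq, Pi.sub_apply]
        rw [hu]
        split_ifs <;> simp
      rw [h4] at h3
      have h5 := h3.trans (mul_le_mul_of_nonneg_left (norm_trunc_le hp T d hd) hγ)
      have h6 : InLp p (G (truncSeq T u) - G (truncSeq T (Q ω))) :=
        inLp_sub hp (hGstab _ h1) (hGstab _ h2)
      have hS : 0 ≤ ∑' t, ‖(G (truncSeq T u) - G (truncSeq T (Q ω))) t‖ ^ p :=
        tsum_nonneg fun t => by positivity
      have h7 := Real.rpow_le_rpow (Real.rpow_nonneg hS _) h5 hp0.le
      rw [← Real.rpow_mul hS, one_div, inv_mul_cancel₀ hp0.ne', Real.rpow_one] at h7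
      refine le_trans ?_ h7
      refine le_trans (le_of_eq ?_) (Summable.sum_le_tsum (Finset.range T)
        (fun t _ => by positivity) h6)
      apply Finset.sum_congr rfl
      intro t ht
      have ht' : t < T := by simpa using ht
      have e : ∀ x : Traj m, G x t = G (truncSeq T x) t := fun x =>
        hG _ _ _ fun s hs => by simp only [truncSeq]; rw [if_pos (by omega)]
      simp only [Pi.sub_apply]
      rw [e u, e (Q ω)]
    have hω2 : ω = (G u - G (Q ω)) + v := by
      conv_lhs => rw [hω, hy]
      abel
    have hωL : InLp p ω := by
      rw [hω2]; exact inLp_add hp hdiff hv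
    have huL : InLp p u := by
      rw [hu]; exact inLp_add hp (hQstab _ hωL) hd
    refine ⟨?_, huL⟩
    rw [hy]; exact inLp_add hp (hGstab _ huL) hv
end

section
/- Let p be a real number with 1 ≤ p < ∞. Let G : ℓ^m → ℓ^r be strictly causal, ℓ_p-stable and incrementally finite-gain ℓ_p-stable, and let K : ℓ^r → ℓ^m be a causal controller whose closed-loop map Φ_{G,K} is ℓ_p-stable (maps ℓ_p^r × ℓ_p^m into ℓ_p^r × ℓ_p^m). Define Q := K ∘ (I − G K)^{-1}, where I − G K : y ↦ y − G(K y) is a bijection with causal inverse (since G∘K is strictly causal). Then Q is causal and ℓ_p-stable, and K equals the internal-model controller built from Q: for every y ∈ ℓ^r, K y = Q ω, where ω is the unique sequence with ω = y − G(Q ω). -/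
theorem fixpt_aux {n : ℕ} (F : Traj n → Traj n) (hF : StrictlyCausal F) : ∃ y, F y = y := by
  have key : ∀ N k t, N ≤ k → t < N → (F^[k] 0) t = (F^[N] 0) t := by
    intro N
    induction N with
    | zero => intro k t _ h; omega
    | succ N ih =>
      intro k t hk ht
      obtain ⟨k, rfl⟩ : ∃ j, k = j + 1 := ⟨k - 1, by omega⟩
      rw [Function.iterate_succ_apply', Function.iterate_succ_apply']
      exact hF _ _ t fun s hs => ih k s (by omega) (by omega)
  refine ⟨fun t => (F^[t + 1] 0) t, ?_⟩
  funext t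
  show _ = (F^[t + 1] 0) t
  rw [Function.iterate_succ_apply']
  exact hF _ _ t fun s hs => (key (s + 1) t s (by omega) (by omega)).symm

/-- necessity — every ℓ_p-stabilizing causal controller `K` for a strictly
causal, ℓ_p-stable, i.f.g. ℓ_p-stable plant `G` arises from the internal-model structure
with the causal ℓ_p-stable parameter `Q = K ∘ (I − G K)⁻¹`. -/
theorem statement11 {r m : ℕ} (p : ℝ) (hp : 1 ≤ p)
    (G : Traj m → Traj r) (K : Traj r → Traj m) (Q : Traj r → Traj m)
    (hG : StrictlyCausal G)
    (hGstab : ∀ u : Traj m, InLp p u → InLp p (G u))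
    (hGifg : ∃ γ : ℝ, 0 ≤ γ ∧ ∀ u₁ u₂ : Traj m, InLp p u₁ → InLp p u₂ →
      lpSeqNorm p (G u₁ - G u₂) ≤ γ * lpSeqNorm p (u₁ - u₂))
    (hK : Causal K)
    -- the closed-loop map of G and K is ℓ_p-stable
    (hCLstab : ∀ (v : Traj r) (d : Traj m) (y : Traj r) (u : Traj m),
      y = G u + v → u = K y + d → InLp p v → InLp p d → InLp p y ∧ InLp p u)
    -- Q := K ∘ (I − G K)⁻¹
    (hQdef : ∀ a y : Traj r, y - G (K y) = a → Q a = K y) :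
    Causal Q ∧
    (∀ a : Traj r, InLp p a → InLp p (Q a)) ∧
    (∀ y : Traj r, ∃! ω : Traj r, ω = y - G (Q ω)) ∧
    (∀ y ω : Traj r, ω = y - G (Q ω) → K y = Q ω) := by
  have surj : ∀ a : Traj r, ∃ y, y - G (K y) = a := by
    intro a
    obtain ⟨y, hy⟩ := fixpt_aux (fun y => a + G (K y)) (by
      intro x x' t h
      show a t + G (K x) t = a t + G (K x') t
      rw [hG (K x) (K x') t fun s hs => hK _ _ s fun q hq => h q (by omega)])
    exact ⟨y, sub_eq_iff_eq_add.mpr hy.symm⟩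
  have main : ∀ y ω : Traj r, ω = y - G (Q ω) → K y = Q ω := by
    intro y ω h
    obtain ⟨y', hy'⟩ := surj ω
    have hq := hQdef _ _ hy'
    have : y' = y := by
      rw [hq] at h
      rw [h] at hy'
      exact sub_left_injective hy'
    rw [hq, this]
  refine ⟨?_, ?_, ?_, main⟩
  · intro a a' t h
    obtain ⟨y, hy⟩ := surj a
    obtain ⟨y', hy'⟩ := surj a'
    rw [hQdef _ _ hy, hQdef _ _ hy']
    have : ∀ s, s ≤ t → y s = y' s := by
      intro s
      induction s using Nat.strong_induction_on with
      | _ s ih =>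
        intro hs
        have e := h s hs
        rw [← hy, ← hy'] at e
        have g : G (K y) s = G (K y') s :=
          hG _ _ s fun q hq => hK _ _ q fun w hw => ih w (by omega) (by omega)
        simp only [Pi.sub_apply, g] at e
        exact sub_left_injective e
    exact hK _ _ t this
  · intro a ha
    obtain ⟨y, hy⟩ := surj a
    rw [hQdef _ _ hy]
    refine (hCLstab a 0 y (K y) ?_ (by simp) ha ?_).2
    · rw [← hy]; abel
    · have hp0 : p ≠ 0 := by linarith
      simp [InLp, Real.zero_rpow hp0, summable_zero]
  · intro y
    refine ⟨y - G (K y), ?_, ?_⟩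
    · show y - G (K y) = y - G (Q (y - G (K y)))
      rw [hQdef _ y rfl]
    · intro ω h
      have := main y ω h
      rw [this]; exact h
end

section
/- Let G : ℓ^m → ℓ^r be strictly causal, and consider feedback controllers K : ℓ^r × ℓ^m → ℓ^m that are causal–strictly-causal (causal in the measurement y, strictly causal in the input u), generating the closed loop y = G u + v, u = K(y,u) + d; for each (v,d) ∈ ℓ^r × ℓ^m these equations have a unique solution (y,u), defining the closed-loop map Φ_{G,K}. A map Ψ = (Ψ^y, Ψ^u) : ℓ^r × ℓ^m → ℓ^r × ℓ^m, with Ψ^{u°}(v,d) := Ψ^u(v,d) − d, equals Φ_{G,K} for some such controller K if and only if: (a) Ψ^{u°} is causal–strictly-causal, and (b) Ψ^y(v,d) = G(Ψ^u(v,d)) + v for every (v,d). Moreover, under (a)–(b) the map Ψ is a bijection of ℓ^r × ℓ^m, and the achieving controller is unique, given by K(y,u) = Ψ^{u°}(Ψ^{-1}(y,u)). -/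
theorem sc_fix {m : ℕ} (F : Traj m → Traj m) (hF : StrictlyCausal F) : ∃ x, x = F x := by
  have key : ∀ t k, t < k → F^[k] 0 t = F^[t+1] 0 t := by
    intro t
    induction t using Nat.strong_induction_on with
    | _ t ih =>
      intro k hk
      obtain ⟨k, rfl⟩ : ∃ j, k = j + 1 := ⟨k - 1, by omega⟩
      rw [Function.iterate_succ_apply', Function.iterate_succ_apply']
      apply hF
      intro s hs
      rw [ih s hs k (by omega), ih s hs t hs]
  refine ⟨fun t => F^[t+1] 0 t, ?_⟩
  funext t
  rw [Function.iterate_succ_apply']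
  apply hF
  intro s hs
  exact key s t hs

theorem sc_unique {m : ℕ} (F : Traj m → Traj m) (hF : StrictlyCausal F) (x y : Traj m)
    (hx : x = F x) (hy : y = F y) : x = y := by
  funext t
  induction t using Nat.strong_induction_on with
  | _ t ih =>
    rw [hx, hy]
    exact hF _ _ _ ih

theorem loop_sc {r m : ℕ} (G : Traj m → Traj r) (hG : StrictlyCausal G)
    (K : Traj r → Traj m → Traj m) (hK : CausalSC K) (v : Traj r) (d : Traj m) :
    StrictlyCausal (fun u => K (G u + v) u + d) := by
  intro x x' t h
  have : K (G x + v) x t = K (G x' + v) x' t := by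
    apply hK _ _ _ _ _ _ h
    intro s hs
    have := hG x x' s (fun q hq => h q (by omega))
    simp [this]
  simp [this]

theorem inv_sc {r m : ℕ} (P : Traj r → Traj m → Traj m) (hP : CausalSC P)
    (v : Traj r) (u : Traj m) : StrictlyCausal (fun d => u - P v d) := by
  intro x x' t h
  have : P v x t = P v x' t := hP _ _ _ _ _ (fun _ _ => rfl) h
  simp [this]

theorem causal_fwd {r m : ℕ} (G : Traj m → Traj r) (hG : StrictlyCausal G)
    (Ψy : Traj r → Traj m → Traj r) (Ψu : Traj r → Traj m → Traj m)
    (K : Traj r → Traj m → Traj m) (hK : CausalSC K)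
    (h : ∀ (v : Traj r) (d : Traj m),
          Ψy v d = G (Ψu v d) + v ∧ Ψu v d = K (Ψy v d) (Ψu v d) + d) :
    CausalSC (fun (v : Traj r) (d : Traj m) => Ψu v d - d) := by
  intro v v' d d' t hv hd
  have e : ∀ v d, Ψu v d - d = K (Ψy v d) (Ψu v d) := fun v d =>
    sub_eq_iff_eq_add.mpr (h v d).2
  have step : ∀ t, (∀ s, s ≤ t → v s = v' s) → (∀ s, s < t → Ψu v d s = Ψu v' d' s) →
      K (Ψy v d) (Ψu v d) t = K (Ψy v' d') (Ψu v' d') t := by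
    intro t hv hu
    apply hK _ _ _ _ _ _ hu
    intro s hs
    have := hG _ _ s (fun q hq => hu q (by omega))
    rw [(h v d).1, (h v' d').1]
    simp [this, hv s hs]
  have ag : ∀ s, s < t → Ψu v d s = Ψu v' d' s := by
    intro s
    induction s using Nat.strong_induction_on with
    | _ s ih =>
      intro hs
      have := step s (fun q hq => hv q (by omega)) (fun q hq => ih q hq (by omega))
      rw [(h v d).2, (h v' d').2]
      simp [this, hd s hs]
  show (Ψu v d - d) t = (Ψu v' d' - d') t
  rw [e, e]
  exact step t hv ag

theorem exists_inv {r m : ℕ} (G : Traj m → Traj r)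
    (Ψy : Traj r → Traj m → Traj r) (Ψu : Traj r → Traj m → Traj m)
    (ha : CausalSC (fun (v : Traj r) (d : Traj m) => Ψu v d - d))
    (hb : ∀ (v : Traj r) (d : Traj m), Ψy v d = G (Ψu v d) + v) (y : Traj r) (u : Traj m) :
    ∃ d, Ψy (y - G u) d = y ∧ Ψu (y - G u) d = u := by
  obtain ⟨d, hd⟩ := sc_fix _ (inv_sc _ ha (y - G u) u)
  have hu : Ψu (y - G u) d = u := by
    have h2 : d + (Ψu (y - G u) d - d) = u := by
      nth_rewrite 1 [hd]
      simp
    simpa using h2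
  refine ⟨d, ?_, hu⟩
  rw [hb, hu]; simp

theorem inj_inv {r m : ℕ} (G : Traj m → Traj r)
    (Ψy : Traj r → Traj m → Traj r) (Ψu : Traj r → Traj m → Traj m)
    (ha : CausalSC (fun (v : Traj r) (d : Traj m) => Ψu v d - d))
    (hb : ∀ (v : Traj r) (d : Traj m), Ψy v d = G (Ψu v d) + v)
    (v v' : Traj r) (d d' : Traj m) (hy : Ψy v d = Ψy v' d') (hu : Ψu v d = Ψu v' d') :
    v = v' ∧ d = d' := by
  have hv : v = v' := by
    rw [hb, hb, hu] at hy
    exact add_left_cancel hy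
  subst hv
  refine ⟨rfl, sc_unique _ (inv_sc _ ha v (Ψu v d)) _ _ ?_ ?_⟩
  · simp
  · simp [hu]

theorem exists_K {r m : ℕ} (G : Traj m → Traj r) (hG : StrictlyCausal G)
    (Ψy : Traj r → Traj m → Traj r) (Ψu : Traj r → Traj m → Traj m)
    (ha : CausalSC (fun (v : Traj r) (d : Traj m) => Ψu v d - d))
    (hb : ∀ (v : Traj r) (d : Traj m), Ψy v d = G (Ψu v d) + v) :
    ∃ K : Traj r → Traj m → Traj m, CausalSC K ∧
        ∀ (v : Traj r) (d : Traj m),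
          Ψy v d = G (Ψu v d) + v ∧ Ψu v d = K (Ψy v d) (Ψu v d) + d := by
  choose D hDy hDu using exists_inv G Ψy Ψu ha hb
  refine ⟨fun y u => u - D y u, ?_, ?_⟩
  · intro y y' u u' t hy hu
    have e : ∀ y u s, (u - D y u) s = (Ψu (y - G u) (D y u) - D y u) s := by
      intro y u s
      rw [hDu]
    have hv : ∀ s, s ≤ t → (y - G u) s = (y' - G u') s := by
      intro s hs
      have := hG u u' s (fun q hq => hu q (by omega))
      simp [this, hy s hs]
    have ag : ∀ s, s < t → D y u s = D y' u' s := by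
      intro s
      induction s using Nat.strong_induction_on with
      | _ s ih =>
        intro hs
        have h1 := ha (y - G u) (y' - G u') (D y u) (D y' u') s
          (fun q hq => hv q (by omega)) (fun q hq => ih q hq (by omega))
        simp only [hDu] at h1
        simpa [hu s hs] using h1
    show (u - D y u) t = (u' - D y' u') t
    rw [e, e]
    exact ha _ _ _ _ t hv ag
  · intro v d
    refine ⟨hb v d, ?_⟩
    have := (inj_inv G Ψy Ψu ha hb _ _ _ _ (hDy (Ψy v d) (Ψu v d)) (hDu (Ψy v d) (Ψu v d))).2
    simp [this]

/-- achievable closed-loop maps with measurable input disturbances, i.e. with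
controllers `u = K(y,u) + d` that are causal in `y` and strictly causal in `u`: the
achievability constraints reduce to (a) causality of `Ψ^{u°}` and (b) `Ψ^y = G Ψ^u + v`;
under (a)-(b), `Ψ` is a bijection and the achieving controller is unique, given by
`K(y,u) = Ψ^{u°}(Ψ⁻¹(y,u))`. -/
theorem statement16 {r m : ℕ} (G : Traj m → Traj r) (hG : StrictlyCausal G)
    (Ψy : Traj r → Traj m → Traj r) (Ψu : Traj r → Traj m → Traj m) :
    -- the closed loop with any causal–strictly-causal K is well posed
    (∀ K : Traj r → Traj m → Traj m, CausalSC K →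
      ∀ (v : Traj r) (d : Traj m),
        ∃! yu : Traj r × Traj m, yu.1 = G yu.2 + v ∧ yu.2 = K yu.1 yu.2 + d) ∧
    -- Ψ is achievable iff (a) and (b) hold
    ((∃ K : Traj r → Traj m → Traj m, CausalSC K ∧
        ∀ (v : Traj r) (d : Traj m),
          Ψy v d = G (Ψu v d) + v ∧ Ψu v d = K (Ψy v d) (Ψu v d) + d)
      ↔
      (CausalSC (fun (v : Traj r) (d : Traj m) => Ψu v d - d) ∧
       ∀ (v : Traj r) (d : Traj m), Ψy v d = G (Ψu v d) + v)) ∧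
    -- under (a)-(b): bijectivity of Ψ, uniqueness of K, and the controller formula
    ((CausalSC (fun (v : Traj r) (d : Traj m) => Ψu v d - d) ∧
      (∀ (v : Traj r) (d : Traj m), Ψy v d = G (Ψu v d) + v)) →
      Function.Bijective
        (fun vd : Traj r × Traj m => (Ψy vd.1 vd.2, Ψu vd.1 vd.2)) ∧
      (∃! K : Traj r → Traj m → Traj m, CausalSC K ∧
        ∀ (v : Traj r) (d : Traj m),
          Ψy v d = G (Ψu v d) + v ∧ Ψu v d = K (Ψy v d) (Ψu v d) + d) ∧
      (∀ K : Traj r → Traj m → Traj m, CausalSC K →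
        (∀ (v : Traj r) (d : Traj m),
          Ψy v d = G (Ψu v d) + v ∧ Ψu v d = K (Ψy v d) (Ψu v d) + d) →
        ∀ (y v : Traj r) (u d : Traj m),
          (Ψy v d, Ψu v d) = (y, u) → K y u = Ψu v d - d)) := by
  have form : ∀ K : Traj r → Traj m → Traj m,
        (∀ (v : Traj r) (d : Traj m),
          Ψy v d = G (Ψu v d) + v ∧ Ψu v d = K (Ψy v d) (Ψu v d) + d) →
        ∀ (y v : Traj r) (u d : Traj m),
          (Ψy v d, Ψu v d) = (y, u) → K y u = Ψu v d - d := by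
    intro K h y v u d e
    obtain ⟨rfl, rfl⟩ := Prod.mk.inj e
    exact eq_sub_of_add_eq (h v d).2.symm
  refine ⟨?_, ⟨?_, ?_⟩, ?_⟩
  · intro K hK v d
    have hs := loop_sc G hG K hK v d
    obtain ⟨u, hu⟩ := sc_fix _ hs
    refine ⟨(G u + v, u), ⟨rfl, hu⟩, ?_⟩
    rintro ⟨y', u'⟩ ⟨h1, h2⟩
    simp only at h1 h2
    subst h1
    have := sc_unique _ hs u' u h2 hu
    subst this
    rfl
  · rintro ⟨K, hK, h⟩
    exact ⟨causal_fwd G hG Ψy Ψu K hK h, fun v d => (h v d).1⟩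
  · rintro ⟨ha, hb⟩
    exact exists_K G hG Ψy Ψu ha hb
  · rintro ⟨ha, hb⟩
    refine ⟨⟨?_, ?_⟩, ?_, fun K _ => form K⟩
    · rintro ⟨v, d⟩ ⟨v', d'⟩ e
      obtain ⟨e1, e2⟩ := Prod.mk.inj e
      obtain ⟨h1, h2⟩ := inj_inv G Ψy Ψu ha hb _ _ _ _ e1 e2
      exact Prod.ext h1 h2
    · rintro ⟨y, u⟩
      obtain ⟨d, h1, h2⟩ := exists_inv G Ψy Ψu ha hb y u
      exact ⟨(y - G u, d), Prod.ext h1 h2⟩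
    · obtain ⟨K, hK, h⟩ := exists_K G hG Ψy Ψu ha hb
      refine ⟨K, ⟨hK, h⟩, ?_⟩
      rintro K' ⟨_, h'⟩
      funext y u
      obtain ⟨d, h1, h2⟩ := exists_inv G Ψy Ψu ha hb y u
      have e : (Ψy (y - G u) d, Ψu (y - G u) d) = (y, u) := Prod.ext h1 h2
      rw [form K' h' y _ u d e, form K h y _ u d e]
end
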